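/- For all 3/5 ≤ β ≤ 1, the binary information distillation function with two quantization levels satisfies 1 - h((1-β)/2) ≤ ID_2(2, β) ≤ 1 - ((2-β)/2) · h((1-β)/(2-β)). -/

import Mathlib

/-!
Write `A = P(X = 0)` and let `condEnt a b` be the contribution to `H(X|Y)` of a letter `y` with
`P(X = 0, Y = y) = a` and `P(X = 1, Y = y) = b`.  Then `I(X;Y) = h(A) - ∑ condEnt`
(`miBits_eq`), both for `Y` and for any quantization of it.

*Lower bound.*  Quantize by the maximum a posteriori decision.  Its error probability is
`Pe = ∑ min (a, b)`, and concavity of `h` gives `2 min (a, b) ≤ condEnt a b`, so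
`Pe ≤ s := (H(X) - β) / 2`.  Superadditivity of `condEnt` (again concavity of `h`) gives Fano's
inequality `H(X | f(Y)) ≤ h(Pe)`.  Hence `I(X; f(Y)) ≥ H(X) - h(s) = β + (2 s - h(s))`.  The
function `2 s - h(s)` is antitone on `[0, 1/5]`, because `h' ≥ 2` there, and
`s ≤ (1 - β) / 2 ≤ 1/5`, which is where `β ≥ 3/5` enters.  Substituting `s = (1 - β) / 2` gives
the bound.

*Upper bound.*  Let `X` be a uniform bit seen through an erasure channel with erasure probability
`1 - β`.  Then `I(X;Y) = β`, and the best quantizer merges the erasure symbol with one of the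
other two symbols.
-/

open scoped BigOperators

/-- Mutual information (in bits) of a joint probability mass function `p` on `𝒳 × 𝒴`,
with the convention `0 · log 0 = 0`. -/
noncomputable def miBits {𝒳 𝒴 : Type*} (p : 𝒳 → 𝒴 → ℝ) : ℝ :=
  ∑' x, ∑' y, p x y * Real.logb 2 (p x y / ((∑' y', p x y') * (∑' x', p x' y)))

/-- `p` is a joint probability mass function. -/
def IsJointPMF {𝒳 𝒴 : Type*} (p : 𝒳 → 𝒴 → ℝ) : Prop :=
  (∀ x y, 0 ≤ p x y) ∧ Summable (fun xy : 𝒳 × 𝒴 => p xy.1 xy.2) ∧ (∑' x, ∑' y, p x y) = 1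

/-- Joint pmf of `(X, f(Y))` when `(X,Y) ~ p` and `f` is a deterministic `M`-level quantizer. -/
noncomputable def quantJoint {𝒳 𝒴 : Type*} (p : 𝒳 → 𝒴 → ℝ) {M : ℕ} (f : 𝒴 → Fin M) :
    𝒳 → Fin M → ℝ :=
  fun x m => ∑' y, if f y = m then p x y else 0

/-- `I(X;[Y]_M)`: the best mutual information achievable by a deterministic `M`-level
quantizer of `Y`. -/
noncomputable def quantMI {𝒳 𝒴 : Type*} (p : 𝒳 → 𝒴 → ℝ) (M : ℕ) : ℝ :=
  ⨆ f : 𝒴 → Fin M, miBits (quantJoint p f)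

/-- The information distillation function `ID_M(K, β)`. -/
noncomputable def ID (M K : ℕ) (β : ℝ) : ℝ :=
  sInf {v | ∃ p : Fin K → ℕ → ℝ, IsJointPMF p ∧ β ≤ miBits p ∧ v = quantMI p M}

/-- Binary entropy function (bits). -/
noncomputable def hBin (t : ℝ) : ℝ :=
  -(t * Real.logb 2 t) - (1 - t) * Real.logb 2 (1 - t)

/-! ### The binary entropy function -/

lemma hBin_eq (t : ℝ) : hBin t = Real.binEntropy t / Real.log 2 := by
  unfold hBin
  rw [Real.binEntropy_eq_negMulLog_add_negMulLog_one_sub]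
  simp only [Real.negMulLog, Real.logb]
  ring

lemma hBin_concave : ConcaveOn ℝ (Set.Icc 0 1) hBin := by
  have h := Real.strictConcave_binEntropy.concaveOn
  have h2 : (0 : ℝ) ≤ (Real.log 2)⁻¹ := inv_nonneg.2 (Real.log_nonneg (by norm_num))
  have h3 := h.smul h2
  refine h3.congr ?_
  intro t _
  simp only [smul_eq_mul, hBin_eq]
  ring

lemma hBin_chord {x y a b : ℝ} (hx : x ∈ Set.Icc (0 : ℝ) 1) (hy : y ∈ Set.Icc (0 : ℝ) 1)
    (ha : 0 ≤ a) (hb : 0 ≤ b) (hab : a + b = 1) :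
    a * hBin x + b * hBin y ≤ hBin (a * x + b * y) :=
  hBin_concave.2 hx hy ha hb hab

lemma hBin_le_one (t : ℝ) : hBin t ≤ 1 := by
  rw [hBin_eq, div_le_one (Real.log_pos (by norm_num))]
  exact Real.binEntropy_le_log_two

lemma hBin_half : hBin (1 / 2) = 1 := by
  rw [hBin_eq, one_div, Real.binEntropy_two_inv, div_self (Real.log_pos (by norm_num)).ne']

lemma hBin_zero : hBin 0 = 0 := by
  rw [hBin_eq, Real.binEntropy_zero, zero_div]

lemma hBin_mono {s t : ℝ} (h0 : 0 ≤ s) (hst : s ≤ t) (ht : t ≤ 1 / 2) : hBin s ≤ hBin t := by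
  rw [hBin_eq, hBin_eq]
  have h2 : (0 : ℝ) < Real.log 2 := Real.log_pos (by norm_num)
  have := Real.binEntropy_strictMonoOn.monotoneOn (a := s) (b := t)
    ⟨h0, by linarith⟩ ⟨h0.trans hst, by linarith⟩ hst
  gcongr

/-- The chord of the concave function `h` from `0` to `1/2` lies below its graph. -/
lemma two_mul_le_hBin {t : ℝ} (h0 : 0 ≤ t) (h1 : t ≤ 1 / 2) : 2 * t ≤ hBin t := by
  have := hBin_chord (x := 0) (y := 1 / 2) (by norm_num) (by norm_num)
    (a := 1 - 2 * t) (b := 2 * t) (by linarith) (by linarith) (by ring)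
  simp only [hBin_zero, hBin_half] at this
  have e : (1 - 2 * t) * 0 + 2 * t * (1 / 2) = t := by ring
  rw [e] at this
  linarith

/-- On `[0, 1/5]` the derivative `log₂ ((1 - s) / s)` of `h` is at least `2`. -/
lemma antitone_two_mul_sub_hBin :
    AntitoneOn (fun s : ℝ => 2 * s - hBin s) (Set.Icc 0 (1 / 5)) := by
  have hl : (0 : ℝ) < Real.log 2 := Real.log_pos (by norm_num)
  have hfun : (fun s : ℝ => 2 * s - hBin s) =
      fun s => 2 * s - Real.binEntropy s / Real.log 2 := by
    funext s; rw [hBin_eq]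
  rw [hfun]
  have hd : ∀ s ∈ interior (Set.Icc (0 : ℝ) (1 / 5)),
      HasDerivAt (fun s => 2 * s - Real.binEntropy s / Real.log 2)
        (2 * 1 - (Real.log (1 - s) - Real.log s) / Real.log 2) s := by
    intro s hs
    rw [interior_Icc] at hs
    exact ((hasDerivAt_id s).const_mul 2).sub
      ((Real.hasDerivAt_binEntropy hs.1.ne' (by linarith [hs.2])).div_const _)
  apply antitoneOn_of_deriv_nonpos (convex_Icc _ _)
  · exact Continuous.continuousOn (by fun_prop)
  · intro s hs
    exact (hd s hs).differentiableAt.differentiableWithinAt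
  · intro s hs
    rw [(hd s hs).deriv]
    rw [interior_Icc] at hs
    have h4 : Real.log (4 * s) ≤ Real.log (1 - s) :=
      Real.log_le_log (by linarith [hs.1]) (by linarith [hs.2])
    rw [Real.log_mul (by norm_num) hs.1.ne', show (4 : ℝ) = 2 ^ 2 by norm_num,
      Real.log_pow] at h4
    push_cast at h4
    have : 2 ≤ (Real.log (1 - s) - Real.log s) / Real.log 2 := by
      rw [le_div_iff₀ hl]; linarith
    linarith

/-! ### Conditional entropy of one letter -/

/-- The contribution to `H(X|Y)` of a letter `y` with `P(X = 0, Y = y) = a` and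
`P(X = 1, Y = y) = b`; it vanishes for `a = b = 0`, by `0 / 0 = 0` and `log 0 = 0`. -/
noncomputable def condEnt (a b : ℝ) : ℝ :=
  -(a * Real.logb 2 (a / (a + b))) - b * Real.logb 2 (b / (a + b))

lemma condEnt_eq (a b : ℝ) (ha : 0 ≤ a) (hb : 0 ≤ b) :
    condEnt a b = (a + b) * hBin (a / (a + b)) := by
  rcases eq_or_lt_of_le (add_nonneg ha hb) with h | h
  · have h1 : a = 0 := by linarith
    have h2 : b = 0 := by linarith
    simp [condEnt, h1, h2]
  · have e : 1 - a / (a + b) = b / (a + b) := by field_simp; ring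
    unfold condEnt hBin
    rw [e]
    field_simp

lemma condEnt_comm (a b : ℝ) : condEnt a b = condEnt b a := by
  unfold condEnt; rw [add_comm b a]; ring

lemma condEnt_zero_right (a : ℝ) : condEnt a 0 = 0 := by
  unfold condEnt
  rcases eq_or_ne a 0 with rfl | h
  · simp
  · simp [h]

lemma condEnt_self {a : ℝ} (ha : 0 ≤ a) : condEnt a a = 2 * a := by
  rw [condEnt_eq a a ha ha]
  rcases eq_or_ne a 0 with rfl | h
  · simp
  · rw [show a / (a + a) = 1 / 2 by field_simp; norm_num, hBin_half]; ring

lemma condEnt_of_add_eq_one {a b : ℝ} (ha : 0 ≤ a) (hb : 0 ≤ b) (h : a + b = 1) :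
    condEnt a b = hBin a := by
  rw [condEnt_eq a b ha hb, h]; simp

lemma neg_mul_logb_nonneg {a b : ℝ} (ha : 0 ≤ a) (hb : 0 ≤ b) :
    0 ≤ -(a * Real.logb 2 (a / (a + b))) := by
  have h1 : a / (a + b) ≤ 1 := div_le_one_of_le₀ (by linarith) (by linarith)
  have h2 : Real.logb 2 (a / (a + b)) ≤ 0 :=
    Real.logb_nonpos (by norm_num) (by positivity) h1
  nlinarith

lemma condEnt_nonneg {a b : ℝ} (ha : 0 ≤ a) (hb : 0 ≤ b) : 0 ≤ condEnt a b := by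
  have h1 := neg_mul_logb_nonneg ha hb
  have h2 := neg_mul_logb_nonneg hb ha
  rw [add_comm b a] at h2
  unfold condEnt; linarith

lemma condEnt_le {a b : ℝ} (ha : 0 ≤ a) (hb : 0 ≤ b) : condEnt a b ≤ a + b := by
  rw [condEnt_eq a b ha hb]
  exact mul_le_of_le_one_right (by linarith) (hBin_le_one _)

/-- The pointwise form of `Pe ≤ H(X|Y) / 2`. -/
lemma two_mul_min_le_condEnt {a b : ℝ} (ha : 0 ≤ a) (hb : 0 ≤ b) :
    2 * min a b ≤ condEnt a b := by
  wlog hab : a ≤ b generalizing a b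
  · rw [min_comm, condEnt_comm]; exact this hb ha (by linarith)
  rw [min_eq_left hab, condEnt_eq a b ha hb]
  rcases eq_or_lt_of_le (add_nonneg ha hb) with h | h
  · have : a = 0 := by linarith
    rw [← h, this]; simp
  · have := two_mul_le_hBin (t := a / (a + b)) (by positivity)
      (by rw [div_le_iff₀ h]; linarith)
    calc 2 * a = (a + b) * (2 * (a / (a + b))) := by field_simp
      _ ≤ _ := by gcongr

/-- `condEnt` is homogeneous and concave, hence superadditive: merging two letters cannot
decrease the conditional entropy. -/
lemma condEnt_add_le {a b c d : ℝ} (ha : 0 ≤ a) (hb : 0 ≤ b) (hc : 0 ≤ c) (hd : 0 ≤ d) :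
    condEnt a b + condEnt c d ≤ condEnt (a + c) (b + d) := by
  rcases eq_or_lt_of_le (add_nonneg ha hb) with h | h
  · have h1 : a = 0 := by linarith
    have h2 : b = 0 := by linarith
    simp [h1, h2, condEnt_zero_right]
  rcases eq_or_lt_of_le (add_nonneg hc hd) with h' | h'
  · have h1 : c = 0 := by linarith
    have h2 : d = 0 := by linarith
    simp [h1, h2, condEnt_zero_right]
  rw [condEnt_eq a b ha hb, condEnt_eq c d hc hd, condEnt_eq _ _ (add_nonneg ha hc)
    (add_nonneg hb hd)]
  have hs : 0 < (a + b) + (c + d) := by linarith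
  have key := hBin_chord (x := a / (a + b)) (y := c / (c + d))
    ⟨by positivity, by rw [div_le_one h]; linarith⟩
    ⟨by positivity, by rw [div_le_one h']; linarith⟩
    (a := (a + b) / ((a + b) + (c + d))) (b := (c + d) / ((a + b) + (c + d)))
    (by positivity) (by positivity) (by field_simp)
  have e : (a + b) / ((a + b) + (c + d)) * (a / (a + b)) +
      (c + d) / ((a + b) + (c + d)) * (c / (c + d)) = (a + c) / (a + c + (b + d)) := by
    rw [show a + c + (b + d) = (a + b) + (c + d) by ring]
    field_simp
  rw [e] at key
  calc _ = ((a + b) + (c + d)) * ((a + b) / ((a + b) + (c + d)) * hBin (a / (a + b)) +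
      (c + d) / ((a + b) + (c + d)) * hBin (c / (c + d))) := by field_simp
    _ ≤ ((a + b) + (c + d)) * hBin ((a + c) / (a + c + (b + d))) := by gcongr
    _ = _ := by ring

/-! ### Mutual information as `H(X) - H(X|Y)` -/

lemma summable_condEnt {ι : Type*} {a b : ι → ℝ} (ha : ∀ y, 0 ≤ a y) (hb : ∀ y, 0 ≤ b y)
    (sa : Summable a) (sb : Summable b) : Summable fun y => condEnt (a y) (b y) :=
  Summable.of_nonneg_of_le (fun y => condEnt_nonneg (ha y) (hb y))
    (fun y => condEnt_le (ha y) (hb y)) (sa.add sb)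

lemma mi_row {ι : Type*} {a b : ι → ℝ} (ha : ∀ y, 0 ≤ a y) (hb : ∀ y, 0 ≤ b y)
    (sa : Summable a) (sb : Summable b) :
    Summable (fun y => a y * Real.logb 2 (a y / (a y + b y))) ∧
    ∑' y, a y * Real.logb 2 (a y / ((∑' y', a y') * (a y + b y))) =
      -((∑' y, a y) * Real.logb 2 (∑' y, a y)) +
        ∑' y, a y * Real.logb 2 (a y / (a y + b y)) := by
  have hs : Summable (fun y => a y * Real.logb 2 (a y / (a y + b y))) := by
    rw [← summable_neg_iff]
    refine Summable.of_nonneg_of_le (fun y => neg_mul_logb_nonneg (ha y) (hb y)) (fun y => ?_)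
      (summable_condEnt ha hb sa sb)
    have := neg_mul_logb_nonneg (hb y) (ha y)
    rw [add_comm (b y)] at this
    unfold condEnt
    linarith
  refine ⟨hs, ?_⟩
  have hpt : ∀ y, a y * Real.logb 2 (a y / ((∑' y', a y') * (a y + b y))) =
      -(a y * Real.logb 2 (∑' y', a y')) + a y * Real.logb 2 (a y / (a y + b y)) := by
    intro y
    rcases eq_or_lt_of_le (ha y) with h | h
    · rw [← h]; simp
    · have hA : 0 < ∑' y', a y' := sa.tsum_pos ha y h
      have hab : 0 < a y + b y := by linarith [hb y]
      rw [mul_comm (∑' y', a y'), ← div_div, Real.logb_div (by positivity) hA.ne']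
      ring
  simp_rw [hpt]
  rw [Summable.tsum_add (sa.mul_right _).neg hs, tsum_neg, tsum_mul_right]

lemma miBits_eq {ι : Type*} {p : Fin 2 → ι → ℝ} (hp : ∀ x y, 0 ≤ p x y)
    (hs : ∀ x, Summable (p x)) (h1 : ∑' y, p 0 y + ∑' y, p 1 y = 1) :
    miBits p = hBin (∑' y, p 0 y) - ∑' y, condEnt (p 0 y) (p 1 y) := by
  obtain ⟨s0, e0⟩ := mi_row (hp 0) (hp 1) (hs 0) (hs 1)
  obtain ⟨s1, e1⟩ := mi_row (hp 1) (hp 0) (hs 1) (hs 0)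
  unfold miBits
  simp only [tsum_fintype, Fin.sum_univ_two]
  simp only [add_comm (p 1 _)] at s1 e1
  rw [e0, e1]
  have : ∑' y, condEnt (p 0 y) (p 1 y) = -(∑' y, p 0 y * Real.logb 2 (p 0 y / (p 0 y + p 1 y)))
      - ∑' y, p 1 y * Real.logb 2 (p 1 y / (p 0 y + p 1 y)) := by
    unfold condEnt
    rw [Summable.tsum_sub s0.neg s1, tsum_neg]
  rw [this]
  have hB : ∑' y, p 1 y = 1 - ∑' y, p 0 y := by linarith
  unfold hBin
  rw [hB]
  ring

/-! ### Quantizers -/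

lemma summable_quant {a : ℕ → ℝ} (sa : Summable a) (f : ℕ → Fin 2) (m : Fin 2) :
    Summable (fun y => if f y = m then a y else 0) := by
  have := sa.indicator {y | f y = m}
  refine this.congr (fun y => ?_)
  simp [Set.indicator]

lemma quantJoint_nonneg {p : Fin 2 → ℕ → ℝ} (hp : ∀ x y, 0 ≤ p x y) (f : ℕ → Fin 2)
    (x m : Fin 2) : 0 ≤ quantJoint p f x m :=
  tsum_nonneg fun y => by split_ifs <;> simp [hp]

lemma quantJoint_add {p : Fin 2 → ℕ → ℝ} (hs : ∀ x, Summable (p x)) (f : ℕ → Fin 2)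
    (x : Fin 2) : quantJoint p f x 0 + quantJoint p f x 1 = ∑' y, p x y := by
  unfold quantJoint
  rw [← Summable.tsum_add (summable_quant (hs x) f 0) (summable_quant (hs x) f 1)]
  refine tsum_congr fun y => ?_
  rcases Fin.exists_fin_two.1 ⟨f y, rfl⟩ with h | h <;> simp [h]

lemma miBits_quant {p : Fin 2 → ℕ → ℝ} (hp : ∀ x y, 0 ≤ p x y)
    (hs : ∀ x, Summable (p x)) (h1 : ∑' y, p 0 y + ∑' y, p 1 y = 1) (f : ℕ → Fin 2) :
    miBits (quantJoint p f) = hBin (∑' y, p 0 y) -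
      (condEnt (quantJoint p f 0 0) (quantJoint p f 1 0) +
        condEnt (quantJoint p f 0 1) (quantJoint p f 1 1)) := by
  rw [miBits_eq (quantJoint_nonneg hp f) (fun _ => (hasSum_fintype _).summable)]
  · simp only [tsum_fintype, Fin.sum_univ_two, quantJoint_add hs]
  · simpa only [tsum_fintype, Fin.sum_univ_two, quantJoint_add hs] using h1

lemma miBits_quant_le_one {p : Fin 2 → ℕ → ℝ} (hp : ∀ x y, 0 ≤ p x y)
    (hs : ∀ x, Summable (p x)) (h1 : ∑' y, p 0 y + ∑' y, p 1 y = 1) (f : ℕ → Fin 2) :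
    miBits (quantJoint p f) ≤ 1 := by
  rw [miBits_quant hp hs h1]
  have := condEnt_nonneg (quantJoint_nonneg hp f 0 0) (quantJoint_nonneg hp f 1 0)
  have := condEnt_nonneg (quantJoint_nonneg hp f 0 1) (quantJoint_nonneg hp f 1 1)
  linarith [hBin_le_one (∑' y, p 0 y)]

/-- The maximum a posteriori quantizer already achieves `1 - h((1 - β) / 2)`. -/
lemma lower_bound {β : ℝ} (hβ : 3 / 5 ≤ β) {p : Fin 2 → ℕ → ℝ}
    (hp : ∀ x y, 0 ≤ p x y) (hs : ∀ x, Summable (p x))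
    (h1 : ∑' y, p 0 y + ∑' y, p 1 y = 1) (hmi : β ≤ miBits p) :
    ∃ f : ℕ → Fin 2, 1 - hBin ((1 - β) / 2) ≤ miBits (quantJoint p f) := by
  classical
  set f : ℕ → Fin 2 := fun y => if p 1 y ≤ p 0 y then 0 else 1 with hf
  refine ⟨f, ?_⟩
  have hPe : quantJoint p f 1 0 + quantJoint p f 0 1 = ∑' y, min (p 0 y) (p 1 y) := by
    unfold quantJoint
    rw [← Summable.tsum_add (summable_quant (hs 1) f 0) (summable_quant (hs 0) f 1)]
    refine tsum_congr fun y => ?_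
    by_cases h : p 1 y ≤ p 0 y
    · simp [hf, h]
    · simp [hf, h, (not_le.1 h).le]
  have smin : Summable fun y => min (p 0 y) (p 1 y) :=
    Summable.of_nonneg_of_le (fun y => le_min (hp 0 y) (hp 1 y)) (fun y => min_le_left _ _) (hs 0)
  have hle : 2 * ∑' y, min (p 0 y) (p 1 y) ≤ ∑' y, condEnt (p 0 y) (p 1 y) := by
    rw [← tsum_mul_left]
    exact Summable.tsum_le_tsum (fun y => two_mul_min_le_condEnt (hp 0 y) (hp 1 y))
      (smin.mul_left 2) (summable_condEnt (hp 0) (hp 1) (hs 0) (hs 1))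
  have n00 := quantJoint_nonneg hp f 0 0
  have n10 := quantJoint_nonneg hp f 1 0
  have n01 := quantJoint_nonneg hp f 0 1
  have n11 := quantJoint_nonneg hp f 1 1
  have a0 := quantJoint_add hs f 0
  have a1 := quantJoint_add hs f 1
  rw [miBits_eq hp hs h1] at hmi
  rw [miBits_quant hp hs h1]
  have fano : condEnt (quantJoint p f 0 0) (quantJoint p f 1 0) +
      condEnt (quantJoint p f 0 1) (quantJoint p f 1 1) ≤
      hBin (quantJoint p f 1 0 + quantJoint p f 0 1) := by
    rw [condEnt_comm (quantJoint p f 0 0),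
      ← condEnt_of_add_eq_one (b := quantJoint p f 0 0 + quantJoint p f 1 1)
        (by linarith) (by linarith) (by linarith)]
    exact condEnt_add_le n10 n00 n01 n11
  have hH := hBin_le_one (∑' y, p 0 y)
  have hmono : hBin (quantJoint p f 1 0 + quantJoint p f 0 1) ≤
      hBin ((hBin (∑' y, p 0 y) - β) / 2) :=
    hBin_mono (by linarith) (by linarith) (by linarith)
  have hanti := antitone_two_mul_sub_hBin (a := (hBin (∑' y, p 0 y) - β) / 2)
    (b := (1 - β) / 2) ⟨by linarith, by linarith⟩ ⟨by linarith, by linarith⟩ (by linarith)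
  simp only at hanti
  linarith

/-! ### The erasure channel -/

/-- Joint law of a uniform bit `X` and the output of an erasure channel with erasure probability
`1 - β`: the letters `0` and `1` reveal `X`, the letter `2` is the erasure symbol, and all other
letters have probability zero. -/
noncomputable def erasure (β : ℝ) : Fin 2 → ℕ → ℝ := fun x y =>
  if y = x.val then β / 2 else if y = 2 then (1 - β) / 2 else 0

lemma erasure_eq_zero (β : ℝ) (x : Fin 2) (y : ℕ) (hy : y ∉ Finset.range 3) :
    erasure β x y = 0 := by
  have := x.isLt
  simp only [Finset.mem_range] at hy
  unfold erasure
  rw [if_neg (by omega), if_neg (by omega)]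

lemma erasure_nonneg {β : ℝ} (h0 : 0 ≤ β) (h1 : β ≤ 1) (x : Fin 2) (y : ℕ) :
    0 ≤ erasure β x y := by
  unfold erasure
  split_ifs <;> linarith

lemma erasure_summable (β : ℝ) (x : Fin 2) : Summable (erasure β x) :=
  summable_of_ne_finset_zero (s := Finset.range 3) (erasure_eq_zero β x)

lemma erasure_sum (β : ℝ) (x : Fin 2) : ∑' y, erasure β x y = 1 / 2 := by
  rw [tsum_eq_sum (s := Finset.range 3) (erasure_eq_zero β x)]
  fin_cases x <;> simp [Finset.sum_range_succ, erasure] <;> ring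

lemma erasure_mi {β : ℝ} (h0 : 0 ≤ β) (h1 : β ≤ 1) : miBits (erasure β) = β := by
  rw [miBits_eq (erasure_nonneg h0 h1) (erasure_summable β)
    (by rw [erasure_sum, erasure_sum]; norm_num), erasure_sum, hBin_half,
    tsum_eq_sum (s := Finset.range 3)]
  · have e : condEnt 0 (β / 2) = 0 := by rw [condEnt_comm, condEnt_zero_right]
    simp [Finset.sum_range_succ, erasure, condEnt_zero_right, e]
    rw [condEnt_self (by linarith)]
    ring
  · intro y hy
    rw [erasure_eq_zero β 0 y hy, erasure_eq_zero β 1 y hy, condEnt_zero_right]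

lemma erasure_quant_le {β : ℝ} (h0 : 0 ≤ β) (h1 : β ≤ 1) (f : ℕ → Fin 2) :
    miBits (quantJoint (erasure β) f) ≤ 1 - condEnt ((1 - β) / 2) (1 / 2) := by
  rw [miBits_quant (erasure_nonneg h0 h1) (erasure_summable β)
    (by rw [erasure_sum, erasure_sum]; norm_num), erasure_sum, hBin_half]
  have hq : ∀ x m, quantJoint (erasure β) f x m =
      (if f 0 = m then erasure β x 0 else 0) + (if f 1 = m then erasure β x 1 else 0) +
        (if f 2 = m then erasure β x 2 else 0) := by
    intro x m
    unfold quantJoint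
    rw [tsum_eq_sum (s := Finset.range 3)]
    · simp [Finset.sum_range_succ]
    · intro y hy
      rw [erasure_eq_zero β x y hy]; simp
  have e00 : erasure β 0 0 = β / 2 := by simp [erasure]
  have e01 : erasure β 0 1 = 0 := by simp [erasure]
  have e02 : erasure β 0 2 = (1 - β) / 2 := by simp [erasure]
  have e10 : erasure β 1 0 = 0 := by simp [erasure]
  have e11 : erasure β 1 1 = β / 2 := by simp [erasure]
  have e12 : erasure β 1 2 = (1 - β) / 2 := by simp [erasure]
  have eh : β / 2 + (1 - β) / 2 = 1 / 2 := by ring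
  have c1 : condEnt 0 (β / 2) = 0 := by rw [condEnt_comm, condEnt_zero_right]
  have c2 := condEnt_zero_right (β / 2)
  have c3 := condEnt_self (a := β / 2) (by linarith)
  have c4 := condEnt_self (a := (1 - β) / 2) (by linarith)
  have c5 := condEnt_self (a := 1 / 2) (by norm_num)
  have c6 := condEnt_comm (1 / 2) ((1 - β) / 2)
  have c7 := condEnt_le (a := (1 - β) / 2) (b := 1 / 2) (by linarith) (by norm_num)
  have c8 := condEnt_zero_right 0
  simp only [hq, e00, e01, e02, e10, e11, e12]
  rcases Fin.exists_fin_two.1 ⟨f 0, rfl⟩ with g0 | g0 <;>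
  rcases Fin.exists_fin_two.1 ⟨f 1, rfl⟩ with g1 | g1 <;>
  rcases Fin.exists_fin_two.1 ⟨f 2, rfl⟩ with g2 | g2 <;>
  simp only [g0, g1, g2, if_true, if_false, zero_ne_one, one_ne_zero, add_zero, zero_add,
    eh] <;> linarith

/-- Proposition 2: bounds on `ID_2(2, β)` in the high mutual information regime. -/
theorem ID_two_levels_high_beta (β : ℝ) (h1 : 3 / 5 ≤ β) (h2 : β ≤ 1) :
    1 - hBin ((1 - β) / 2) ≤ ID 2 2 β ∧
    ID 2 2 β ≤ 1 - (2 - β) / 2 * hBin ((1 - β) / (2 - β)) := by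
  have h0 : 0 ≤ β := by linarith
  have hmem : ∃ p : Fin 2 → ℕ → ℝ, IsJointPMF p ∧ β ≤ miBits p ∧
      quantMI (erasure β) 2 = quantMI p 2 := by
    refine ⟨erasure β, ⟨erasure_nonneg h0 h2, ?_, ?_⟩, (erasure_mi h0 h2).ge, rfl⟩
    · refine summable_of_ne_finset_zero (s := Finset.univ ×ˢ Finset.range 3) fun xy hxy => ?_
      exact erasure_eq_zero β _ _ fun h => hxy (by simpa using h)
    · simp only [tsum_fintype, Fin.sum_univ_two, erasure_sum]
      norm_num
  have hlow : ∀ v ∈ {v | ∃ p : Fin 2 → ℕ → ℝ, IsJointPMF p ∧ β ≤ miBits p ∧ v = quantMI p 2},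
      1 - hBin ((1 - β) / 2) ≤ v := by
    rintro v ⟨p, ⟨hp, hs, ht⟩, hmi, rfl⟩
    have hs' : ∀ x, Summable (p x) := fun x => hs.prod_factor x
    simp only [tsum_fintype, Fin.sum_univ_two] at ht
    obtain ⟨f, hf⟩ := lower_bound h1 hp hs' ht hmi
    refine hf.trans (le_ciSup (f := fun f : ℕ → Fin 2 => miBits (quantJoint p f)) ⟨1, ?_⟩ f)
    rintro _ ⟨g, rfl⟩
    exact miBits_quant_le_one hp hs' ht g
  refine ⟨le_csInf ⟨_, hmem⟩ hlow, (csInf_le ⟨_, hlow⟩ hmem).trans ?_⟩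
  refine ciSup_le fun f => (erasure_quant_le h0 h2 f).trans (le_of_eq ?_)
  rw [condEnt_eq _ _ (by linarith) (by norm_num),
    show (1 - β) / 2 + 1 / 2 = (2 - β) / 2 by ring,
    div_div_div_cancel_right₀ (by norm_num)]
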